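/- Let n ≥ 3 and let c₁, c₂ ∈ ℝ. Consider the two curve-germs in ℝ^{2n} (coordinates (p₁,q₁,p₂,q₂,p₃,q₃,…,pₙ,qₙ), all unlisted coordinates equal to 0): B₁(t) = (t³, (1/2)t⁴, 0, c₂t⁵, −t², 0, …, 0) and B₂(t) = (t³, (c₁/2)t⁴, −t², 0, 0, 0, …, 0) (the class (T₇)³). Then Lt(B₁,B₂) = 5 and Lt(B₁) = 5; moreover Lt(B₂) = 5 if c₁ ≠ 0 and Lt(B₂) = ∞ if c₁ = 0. -/

import Mathlib

noncomputable section

/-- The order of vanishing at `0` of a function `h : ℝ → ℝ`: the least `k ≥ 1` such that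
the `k`-th derivative of `h` at `0` is nonzero, and `∞` if all derivatives vanish at `0`. -/
def vanishOrder (h : ℝ → ℝ) : ℕ∞ :=
  sInf {k : ℕ∞ | ∃ m : ℕ, k = m ∧ 1 ≤ m ∧ iteratedDeriv m h 0 ≠ 0}

/-- The standard symplectic form `ω = ∑ dpᵢ ∧ dqᵢ` on `ℝ^{2n}`, where the coordinates are
ordered as `(p₁, q₁, …, pₙ, qₙ)` (so `pᵢ` has index `2(i-1)` and `qᵢ` has index `2(i-1)+1`). -/
def stdSymp (n : ℕ) (u v : Fin (2 * n) → ℝ) : ℝ :=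
  ∑ i : Fin n,
    (u ⟨2 * i.val, by have := i.isLt; omega⟩ * v ⟨2 * i.val + 1, by have := i.isLt; omega⟩ -
     u ⟨2 * i.val + 1, by have := i.isLt; omega⟩ * v ⟨2 * i.val, by have := i.isLt; omega⟩)

/-- A germ at `0` of a smooth Lagrangian submanifold of `(ℝ^{2n}, ω)`, given by `n` smooth
functions `H₁, …, Hₙ` vanishing at `0`, whose differentials are linearly independent at the
points of `{H₁ = ⋯ = Hₙ = 0}` near `0`, and such that `ω` vanishes on `ker DH(x)` at every
such point. -/
structure LagrangianGerm (n : ℕ) : Type where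
  H : Fin n → (Fin (2 * n) → ℝ) → ℝ
  smooth : ∀ i, ContDiff ℝ (⊤ : ℕ∞) (H i)
  zero_at_zero : ∀ i, H i 0 = 0
  lagrangian : ∃ U : Set (Fin (2 * n) → ℝ), IsOpen U ∧ 0 ∈ U ∧
    ∀ x ∈ U, (∀ i, H i x = 0) →
      LinearIndependent ℝ (fun i => fderiv ℝ (H i) x) ∧
      ∀ u v : Fin (2 * n) → ℝ, (∀ i, fderiv ℝ (H i) x u = 0) →
        (∀ i, fderiv ℝ (H i) x v = 0) → stdSymp n u v = 0

/-- The tangency order `t(f, L)` of a curve `f` to a Lagrangian submanifold-germ `L`: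
the minimum over `i` of the order of vanishing at `0` of `Hᵢ ∘ f`. -/
def tOrd {n : ℕ} (f : ℝ → Fin (2 * n) → ℝ) (L : LagrangianGerm n) : ℕ∞ :=
  ⨅ i : Fin n, vanishOrder (fun t => L.H i (f t))

/-- The Lagrangian tangency order `Lt(f)` of a curve `f`. -/
def Lt1 {n : ℕ} (f : ℝ → Fin (2 * n) → ℝ) : ℕ∞ :=
  ⨆ L : LagrangianGerm n, tOrd f L

/-- The Lagrangian tangency order `Lt(f, g)` of a multi-germ of two curves. -/
def Lt2 {n : ℕ} (f g : ℝ → Fin (2 * n) → ℝ) : ℕ∞ :=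
  ⨆ L : LagrangianGerm n, min (tOrd f L) (tOrd g L)

/-- The Lagrangian tangency order `Lt(f, g, h)` of a multi-germ of three curves. -/
def Lt3 {n : ℕ} (f g h : ℝ → Fin (2 * n) → ℝ) : ℕ∞ :=
  ⨆ L : LagrangianGerm n, min (tOrd f L) (min (tOrd g L) (tOrd h L))

/-!
Suppose that `f = t²X₂ + t³X₃ + t⁴X₄ + t⁵X₅` is tangent to `L` to an order greater than `5`.
Comparing Taylor coefficients along `f`, every linear combination `A` of the defining functions of
`L` satisfies `dA(X₂) = dA(X₃) = 0`, `dA(X₄) = -½ D²A(X₂, X₂)` and `dA(X₅) = -D²A(X₂, X₃)` at `0`.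
So `X₂` and `X₃` lie in `T₀L`, and since `T₀L` is its own `ω`-orthogonal complement there are
combinations `A` and `B` with `dA = ω(X₂, ·)` and `dB = ω(X₃, ·)` at `0`. The Poisson bracket
`{A, B}` vanishes on `L`; its derivative along `X₂ ∈ T₀L` gives `D²A(X₂, X₃) = D²B(X₂, X₂)`, that
is, `ω(X₂, X₅) = 2ω(X₃, X₄)`. This relation fails for `B₁`, and for `B₂` unless `c₁ = 0`.

Conversely, the graph of `dS` for `S = ½ p₁(c₁p₂² + p₃²)` is tangent to both branches to order at
least `5`, and if `c₁ = 0` it contains `B₂`.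
-/

open Asymptotics Filter Topology Module
open scoped ContDiff

section Analysis

variable {E F : Type*} [NormedAddCommGroup E] [NormedSpace ℝ E]
  [NormedAddCommGroup F] [NormedSpace ℝ F]

theorem isBigO_norm_sub_pow_succ_of_fderiv {g : E → F} (hg : Differentiable ℝ g) {x₀ : E}
    (h0 : g x₀ = 0) {k : ℕ} (h : fderiv ℝ g =O[𝓝 x₀] fun x => ‖x - x₀‖ ^ k) :
    g =O[𝓝 x₀] fun x => ‖x - x₀‖ ^ (k + 1) := by
  obtain ⟨C, hC, hbound⟩ := h.exists_pos
  obtain ⟨r, hr, hball⟩ := Metric.eventually_nhds_iff_ball.1 hbound.bound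
  refine IsBigO.of_bound C ?_
  filter_upwards [Metric.ball_mem_nhds x₀ hr] with x hx
  have hfderiv : ∀ y ∈ Metric.closedBall x₀ ‖x - x₀‖, ‖fderiv ℝ g y‖ ≤ C * ‖x - x₀‖ ^ k := by
    intro y hy
    rw [mem_closedBall_iff_norm] at hy
    rw [mem_ball_iff_norm] at hx
    calc ‖fderiv ℝ g y‖ ≤ C * ‖‖y - x₀‖ ^ k‖ :=
          hball y (mem_ball_iff_norm.2 (hy.trans_lt hx))
      _ ≤ C * ‖x - x₀‖ ^ k := by rw [norm_pow, norm_norm]; gcongr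
  calc ‖g x‖ = ‖g x - g x₀‖ := by rw [h0, sub_zero]
    _ ≤ C * ‖x - x₀‖ ^ k * ‖x - x₀‖ :=
        (convex_closedBall x₀ ‖x - x₀‖).norm_image_sub_le_of_norm_fderiv_le (fun y _ => hg y)
          hfderiv (Metric.mem_closedBall_self (norm_nonneg _)) (mem_closedBall_iff_norm.2 le_rfl)
    _ = C * ‖‖x - x₀‖ ^ (k + 1)‖ := by rw [norm_pow, norm_norm, pow_succ, mul_assoc]

theorem taylor_two_isBigO {A : E → F} (hA : ContDiff ℝ 3 A) (x₀ : E) :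
    (fun x => A x - A x₀ - fderiv ℝ A x₀ (x - x₀)
        - (1 / 2 : ℝ) • fderiv ℝ (fderiv ℝ A) x₀ (x - x₀) (x - x₀))
      =O[𝓝 x₀] fun x => ‖x - x₀‖ ^ 3 := by
  have hA' : ContDiff ℝ 2 (fderiv ℝ A) := hA.fderiv_right (by norm_num)
  have hA'' : ContDiff ℝ 1 (fderiv ℝ (fderiv ℝ A)) := hA'.fderiv_right (by norm_num)
  have hsymm : IsSymmSndFDerivAt ℝ A x₀ :=
    hA.contDiffAt.isSymmSndFDerivAt (by simpa using by norm_num)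
  set D := fderiv ℝ (fderiv ℝ A) x₀
  have hderiv₁ (x : E) : HasFDerivAt (fun x => fderiv ℝ A x - fderiv ℝ A x₀ - D (x - x₀))
      (fderiv ℝ (fderiv ℝ A) x - D) x :=
    ((hA'.differentiable (by norm_num) x).hasFDerivAt.sub_const _).sub
      (D.hasFDerivAt.comp x ((hasFDerivAt_id x).sub_const x₀))
  have hderiv₀ (x : E) : HasFDerivAt
      (fun x => A x - A x₀ - fderiv ℝ A x₀ (x - x₀) - (1 / 2 : ℝ) • D (x - x₀) (x - x₀))
      (fderiv ℝ A x - fderiv ℝ A x₀ - D (x - x₀)) x := by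
    have hsub := (hasFDerivAt_id (𝕜 := ℝ) x).sub_const x₀
    have hlin := (fderiv ℝ A x₀).hasFDerivAt.comp x hsub
    have hquad := ((D.hasFDerivAt.comp x hsub).clm_apply hsub).const_smul (1 / 2 : ℝ)
    refine ((((hA.differentiable (by norm_num) x).hasFDerivAt.sub_const _).sub hlin).sub
      hquad).congr_fderiv ?_
    ext v
    have hcomm : D v (x - x₀) = D (x - x₀) v := hsymm v (x - x₀)
    have hhalf : (1 / 2 : ℝ) • (D (x - x₀) v + D v (x - x₀)) = D (x - x₀) v := by
      rw [hcomm]; module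
    exact congrArg (fderiv ℝ A x v - fderiv ℝ A x₀ v - ·) hhalf
  have hfirst : (fun x => fderiv ℝ A x - fderiv ℝ A x₀ - D (x - x₀))
      =O[𝓝 x₀] fun x => ‖x - x₀‖ ^ 2 := by
    refine isBigO_norm_sub_pow_succ_of_fderiv (fun x => (hderiv₁ x).differentiableAt) (by simp) ?_
    rw [funext fun x => (hderiv₁ x).fderiv]
    simpa using (hA''.differentiable (by norm_num) x₀).isBigO_sub.norm_right
  refine isBigO_norm_sub_pow_succ_of_fderiv (fun x => (hderiv₀ x).differentiableAt) (by simp) ?_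
  rwa [funext fun x => (hderiv₀ x).fderiv]

theorem eq_zero_of_sum_mul_pow_isLittleO {N : ℕ} {c : Fin (N + 1) → ℝ}
    (h : (fun t : ℝ => ∑ k, c k * t ^ (k : ℕ)) =o[𝓝 0] fun t => t ^ N) : c = 0 := by
  have hlead {m : ℕ} {a : ℝ} (ha : (fun t : ℝ => a * t ^ m) =o[𝓝 0] fun t => t ^ m) : a = 0 := by
    by_contra hne
    refine isLittleO_irrefl' ?_ ((isLittleO_const_mul_left_iff hne).1 ha)
    have hfreq : ∃ᶠ t : ℝ in 𝓝[≠] 0, t ^ m ≠ 0 :=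
      (eventually_mem_nhdsWithin.mono fun t (ht : t ∈ ({0}ᶜ : Set ℝ)) =>
        pow_ne_zero m ht).frequently
    exact (hfreq.filter_mono nhdsWithin_le_nhds).mono fun t => norm_ne_zero_iff.2
  induction N with
  | zero => exact funext (Fin.forall_fin_one.2 (by simpa using h))
  | succ N ih =>
    simp only [Fin.sum_univ_castSucc (n := N + 1), Fin.val_castSucc, Fin.val_last] at h
    have hpow : (fun t : ℝ => t ^ (N + 1)) =o[𝓝 0] fun t => t ^ N :=
      isLittleO_pow_pow N.lt_succ_self
    have hinit : (fun k => c (Fin.castSucc k)) = 0 :=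
      ih (((h.trans hpow).sub (hpow.const_mul_left (c (Fin.last _)))).congr_left fun t => by ring)
    have hlast : c (Fin.last _) = 0 :=
      hlead (h.congr_left fun t => by simp [congrFun hinit])
    ext k
    refine Fin.lastCases hlast (congrFun hinit) k

theorem isLittleO_pow_mul_of_lt {R : ℝ → ℝ} (hR : Continuous R) {m k : ℕ} (h : k < m) :
    (fun t => t ^ m * R t) =o[𝓝 0] fun t => t ^ k := by
  simpa using (isLittleO_pow_pow h).mul_isBigO ((hR.tendsto 0).isBigO_one ℝ)

theorem fderiv_apply_eq_zero_of_eventuallyEq_on_level {ι : Type*} [Finite ι] [CompleteSpace E]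
    {H : ι → E → ℝ} {H' : ι → E →L[ℝ] ℝ} {φ : E → ℝ} {φ' : E →L[ℝ] ℝ} {x v : E}
    (hH : ∀ i, HasStrictFDerivAt (H i) (H' i) x) (hφ : HasStrictFDerivAt φ φ' x)
    (hli : LinearIndependent ℝ H')
    (hconst : ∀ᶠ y in 𝓝[{y | ∀ i, H i y = H i x}] x, φ y = φ x) (hv : ∀ i, H' i v = 0) :
    φ' v = 0 := by
  cases nonempty_fintype ι
  have hextr : IsLocalExtrOn φ {y | ∀ i, H i y = H i x} x := .inl (hconst.mono fun y hy => hy.ge)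
  obtain ⟨Λ, Λ₀, hne, hsum⟩ := hextr.exists_multipliers_of_hasStrictFDerivAt hH hφ
  have hΛ₀ : Λ₀ ≠ 0 := by
    rintro rfl
    rw [zero_smul, add_zero] at hsum
    exact hne (Prod.ext (funext (Fintype.linearIndependent_iff.1 hli Λ hsum)) rfl)
  have happly := congrArg (fun α : E →L[ℝ] ℝ => α v) hsum
  simpa [hv, hΛ₀] using happly

end Analysis

theorem coe_le_vanishOrder_iff {h : ℝ → ℝ} {N : ℕ} :
    (N : ℕ∞) ≤ vanishOrder h ↔ ∀ m, 1 ≤ m → m < N → iteratedDeriv m h 0 = 0 := by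
  simp only [vanishOrder, le_sInf_iff, Set.mem_ofPred_eq]
  constructor
  · intro hle m hm hmN
    by_contra hne
    exact hmN.not_ge (Nat.cast_le.1 (hle m ⟨m, rfl, hm, hne⟩))
  · rintro hvanish _ ⟨m, rfl, hm, hne⟩
    exact Nat.cast_le.2 (not_lt.1 fun hmN => hne (hvanish m hm hmN))

theorem isLittleO_pow_of_lt_vanishOrder {h : ℝ → ℝ} {N : ℕ} (hh : ContDiff ℝ N h) (h0 : h 0 = 0)
    (hN : N < vanishOrder h) : h =o[𝓝 0] fun t => t ^ N := by
  have hvanish (m : ℕ) (hm : m ∈ Finset.range (N + 1)) : iteratedDeriv m h 0 = 0 := by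
    obtain rfl | hpos := m.eq_zero_or_pos
    · rwa [iteratedDeriv_zero]
    · exact coe_le_vanishOrder_iff.1 (by exact_mod_cast Order.add_one_le_of_lt hN) m hpos
        (Finset.mem_range.1 hm)
  have htaylor : taylorWithinEval h N Set.univ 0 = 0 := by
    ext t
    simp only [taylor_within_apply, iteratedDerivWithin_univ]
    exact Finset.sum_eq_zero fun m hm => by rw [hvanish m hm, smul_zero]
  simpa [htaylor] using taylor_isLittleO_univ (x₀ := 0) hh

theorem coe_le_vanishOrder_const_mul_pow (c : ℝ) (N : ℕ) :
    (N : ℕ∞) ≤ vanishOrder fun t => c * t ^ N := by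
  refine coe_le_vanishOrder_iff.2 fun m _ hm => ?_
  rw [iteratedDeriv_const_mul_field, iteratedDeriv_pow]
  simp [Nat.sub_ne_zero_of_lt hm]

theorem vanishOrder_zero : vanishOrder (fun _ => 0) = ⊤ := by
  simp [vanishOrder]

section CuspidalCurve

/-- The curve `t ↦ t²X₂ + t³X₃ + t⁴X₄ + t⁵X₅`. Both branches of the class `(T₇)³` are of this
form. -/
def cuspidalCurve {V : Type*} [AddCommGroup V] [Module ℝ V] (X₂ X₃ X₄ X₅ : V) (t : ℝ) : V :=
  t ^ 2 • X₂ + t ^ 3 • X₃ + t ^ 4 • X₄ + t ^ 5 • X₅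

variable {V : Type*} [NormedAddCommGroup V] [NormedSpace ℝ V] (X₂ X₃ X₄ X₅ : V)

theorem contDiff_cuspidalCurve {k : WithTop ℕ∞} : ContDiff ℝ k (cuspidalCurve X₂ X₃ X₄ X₅) := by
  unfold cuspidalCurve; fun_prop

theorem cuspidalCurve_zero : cuspidalCurve X₂ X₃ X₄ X₅ 0 = 0 := by simp [cuspidalCurve]

theorem cuspidalCurve_isBigO : cuspidalCurve X₂ X₃ X₄ X₅ =O[𝓝 0] fun t : ℝ => t ^ 2 := by
  have hfactor (t : ℝ) :
      t ^ 2 • (X₂ + t • X₃ + t ^ 2 • X₄ + t ^ 3 • X₅) = cuspidalCurve X₂ X₃ X₄ X₅ t := by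
    unfold cuspidalCurve; module
  have hcont : Continuous fun t : ℝ => X₂ + t • X₃ + t ^ 2 • X₄ + t ^ 3 • X₅ := by fun_prop
  have hmul := (isBigO_refl (fun t : ℝ => t ^ 2) (𝓝 0)).smul ((hcont.tendsto 0).isBigO_one ℝ)
  simpa only [hfactor, smul_eq_mul, mul_one] using hmul

theorem comp_cuspidalCurve_sub_isLittleO {A : V → ℝ} (hA : ContDiff ℝ 3 A) (h0 : A 0 = 0) :
    (fun t => A (cuspidalCurve X₂ X₃ X₄ X₅ t)
        - fderiv ℝ A 0 (cuspidalCurve X₂ X₃ X₄ X₅ t)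
        - 1 / 2 * fderiv ℝ (fderiv ℝ A) 0 (cuspidalCurve X₂ X₃ X₄ X₅ t)
          (cuspidalCurve X₂ X₃ X₄ X₅ t)) =o[𝓝 0] fun t : ℝ => t ^ 5 := by
  have htendsto : Tendsto (cuspidalCurve X₂ X₃ X₄ X₅) (𝓝 0) (𝓝 0) :=
    (contDiff_cuspidalCurve X₂ X₃ X₄ X₅ (k := 0)).continuous.tendsto' 0 0
      (cuspidalCurve_zero X₂ X₃ X₄ X₅)
  have hcube : (fun t => ‖cuspidalCurve X₂ X₃ X₄ X₅ t‖ ^ 3) =O[𝓝 0] fun t : ℝ => t ^ 6 := by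
    simpa only [← pow_mul] using (cuspidalCurve_isBigO X₂ X₃ X₄ X₅).norm_left.pow 3
  have htaylor := (taylor_two_isBigO hA 0).comp_tendsto htendsto
  simp only [Function.comp_def, sub_zero, h0, smul_eq_mul] at htaylor
  exact (htaylor.trans hcube).trans_isLittleO (isLittleO_pow_pow (by norm_num))

theorem apply_cuspidalCurve_self_sub_isLittleO {D : V →L[ℝ] V →L[ℝ] ℝ}
    (hD : ∀ x y, D x y = D y x) :
    (fun t => D (cuspidalCurve X₂ X₃ X₄ X₅ t) (cuspidalCurve X₂ X₃ X₄ X₅ t)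
        - (t ^ 4 * D X₂ X₂ + 2 * t ^ 5 * D X₂ X₃)) =o[𝓝 0] fun t : ℝ => t ^ 5 := by
  have hcont : Continuous fun t : ℝ => D X₃ X₃ + 2 * D X₂ (X₄ + t • X₅)
      + 2 * t * D X₃ (X₄ + t • X₅) + t ^ 2 * D (X₄ + t • X₅) (X₄ + t • X₅) := by fun_prop
  refine (isLittleO_pow_mul_of_lt hcont (m := 6) (by norm_num)).congr_left fun t => ?_
  simp only [cuspidalCurve, map_add, map_smul, add_apply, smul_apply, smul_eq_mul]
  rw [hD X₃ X₂, hD X₄ X₂, hD X₄ X₃, hD X₅ X₂, hD X₅ X₃, hD X₅ X₄]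
  ring

variable {X₂ X₃ X₄ X₅} in
theorem jet_relations_of_comp_cuspidalCurve_isLittleO {A : V → ℝ} (hA : ContDiff ℝ 3 A)
    (h0 : A 0 = 0) (h : (fun t => A (cuspidalCurve X₂ X₃ X₄ X₅ t)) =o[𝓝 0] fun t => t ^ 5) :
    fderiv ℝ A 0 X₂ = 0 ∧ fderiv ℝ A 0 X₃ = 0 ∧
      fderiv ℝ A 0 X₄ = -(1 / 2 * fderiv ℝ (fderiv ℝ A) 0 X₂ X₂) ∧
      fderiv ℝ A 0 X₅ = -fderiv ℝ (fderiv ℝ A) 0 X₂ X₃ := by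
  have hsymm : IsSymmSndFDerivAt ℝ A 0 :=
    hA.contDiffAt.isSymmSndFDerivAt (by simpa using by norm_num)
  set a := fderiv ℝ A 0
  set D := fderiv ℝ (fderiv ℝ A) 0
  have htaylor := comp_cuspidalCurve_sub_isLittleO X₂ X₃ X₄ X₅ hA h0
  have hquad :=
    (apply_cuspidalCurve_self_sub_isLittleO X₂ X₃ X₄ X₅ hsymm.eq).const_mul_left (1 / 2)
  have hcoeff : ![0, 0, a X₂, a X₃, a X₄ + 1 / 2 * D X₂ X₂, a X₅ + D X₂ X₃] = 0 := by
    refine eq_zero_of_sum_mul_pow_isLittleO (((h.sub htaylor).sub hquad).congr_left fun t => ?_)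
    rw [Fin.sum_univ_six]
    simp only [cuspidalCurve, map_add, map_smul, smul_eq_mul, Matrix.cons_val,
      Fin.coe_ofNat_eq_mod, a, D]
    ring
  have hcoeff₂ := congrFun hcoeff 2
  have hcoeff₃ := congrFun hcoeff 3
  have hcoeff₄ := congrFun hcoeff 4
  have hcoeff₅ := congrFun hcoeff 5
  exact ⟨hcoeff₂, hcoeff₃, eq_neg_of_add_eq_zero_left hcoeff₄, eq_neg_of_add_eq_zero_left hcoeff₅⟩

end CuspidalCurve

section StandardSymplectic

variable {n : ℕ}

/-- The position of the coordinate `pᵢ` in `ℝ^{2n}`; the index `i` starts at `0`. -/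
def pIndex (i : Fin n) : Fin (2 * n) := ⟨2 * i, by omega⟩

/-- The position of the coordinate `qᵢ` in `ℝ^{2n}`; the index `i` starts at `0`. -/
def qIndex (i : Fin n) : Fin (2 * n) := ⟨2 * i + 1, by omega⟩

@[simp]
theorem pIndex_inj {i j : Fin n} : pIndex i = pIndex j ↔ i = j := by
  simp [pIndex, Fin.ext_iff]

@[simp]
theorem qIndex_inj {i j : Fin n} : qIndex i = qIndex j ↔ i = j := by
  simp [qIndex, Fin.ext_iff]

@[simp]
theorem pIndex_ne_qIndex (i j : Fin n) : pIndex i ≠ qIndex j := by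
  simp only [pIndex, qIndex, ne_eq, Fin.ext_iff]; omega

theorem ext_pIndex_qIndex {x y : Fin (2 * n) → ℝ} (hp : ∀ i, x (pIndex i) = y (pIndex i))
    (hq : ∀ i, x (qIndex i) = y (qIndex i)) : x = y := by
  ext m
  obtain h | h : m = pIndex ⟨m / 2, by omega⟩ ∨ m = qIndex ⟨m / 2, by omega⟩ := by
    simp only [pIndex, qIndex, Fin.ext_iff]; omega
  · rw [h, hp]
  · rw [h, hq]

theorem stdSymp_eq_sum (u v : Fin (2 * n) → ℝ) :
    stdSymp n u v = ∑ i, (u (pIndex i) * v (qIndex i) - u (qIndex i) * v (pIndex i)) := rfl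

theorem stdSymp_swap (u v : Fin (2 * n) → ℝ) : stdSymp n v u = -stdSymp n u v := by
  simp only [stdSymp_eq_sum, ← Finset.sum_neg_distrib]
  exact Finset.sum_congr rfl fun i _ => by ring

variable (n) in
/-- `stdSymp n` as a bilinear form, so that Mathlib's theory of orthogonal complements applies. -/
def sympForm : LinearMap.BilinForm ℝ (Fin (2 * n) → ℝ) :=
  LinearMap.mk₂ ℝ (stdSymp n)
    (fun u u' v => by
      simp only [stdSymp_eq_sum, ← Finset.sum_add_distrib, Pi.add_apply]
      exact Finset.sum_congr rfl fun i _ => by ring)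
    (fun a u v => by
      simp only [stdSymp_eq_sum, Finset.mul_sum, Pi.smul_apply, smul_eq_mul]
      exact Finset.sum_congr rfl fun i _ => by ring)
    (fun u v v' => by
      simp only [stdSymp_eq_sum, ← Finset.sum_add_distrib, Pi.add_apply]
      exact Finset.sum_congr rfl fun i _ => by ring)
    (fun a u v => by
      simp only [stdSymp_eq_sum, Finset.mul_sum, Pi.smul_apply, smul_eq_mul]
      exact Finset.sum_congr rfl fun i _ => by ring)

@[simp]
theorem sympForm_apply (u v : Fin (2 * n) → ℝ) : sympForm n u v = stdSymp n u v := rfl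

theorem sympForm_isRefl : (sympForm n).IsRefl := fun u v h => by
  rw [sympForm_apply] at h ⊢; rw [stdSymp_swap, h, neg_zero]

theorem stdSymp_single_qIndex (u : Fin (2 * n) → ℝ) (i : Fin n) (a : ℝ) :
    stdSymp n u (Pi.single (qIndex i) a) = u (pIndex i) * a := by
  simp [stdSymp_eq_sum, Pi.single_apply]

theorem stdSymp_single_pIndex (u : Fin (2 * n) → ℝ) (i : Fin n) (a : ℝ) :
    stdSymp n u (Pi.single (pIndex i) a) = -(u (qIndex i) * a) := by
  simp [stdSymp_eq_sum, Pi.single_apply]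

theorem sympForm_nondegenerate : (sympForm n).Nondegenerate := by
  refine sympForm_isRefl.nondegenerate_iff_separatingLeft.2 fun u hu => ext_pIndex_qIndex ?_ ?_
  · exact fun i => by simpa [stdSymp_single_qIndex] using hu (Pi.single (qIndex i) 1)
  · exact fun i => by simpa [stdSymp_single_pIndex] using hu (Pi.single (pIndex i) 1)

variable (n) in
/-- The isomorphism `u ↦ ω(u, ·)` of `ℝ^{2n}` with its dual; its inverse sends a differential to
the corresponding Hamiltonian vector. -/
def sympDual : (Fin (2 * n) → ℝ) ≃L[ℝ] ((Fin (2 * n) → ℝ) →L[ℝ] ℝ) :=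
  (((sympForm n).toDual sympForm_nondegenerate).trans
    LinearMap.toContinuousLinearMap).toContinuousLinearEquiv

@[simp]
theorem sympDual_apply (u v : Fin (2 * n) → ℝ) : sympDual n u v = stdSymp n u v := rfl

theorem stdSymp_sympDual_symm (α : (Fin (2 * n) → ℝ) →L[ℝ] ℝ) (v : Fin (2 * n) → ℝ) :
    stdSymp n ((sympDual n).symm α) v = α v := by
  rw [← sympDual_apply, ContinuousLinearEquiv.apply_symm_apply]

end StandardSymplectic

theorem orthogonal_eq_self_of_isotropic {K V : Type*} [Field K] [AddCommGroup V] [Module K V]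
    [FiniteDimensional K V] {B : LinearMap.BilinForm K V} (hB : B.Nondegenerate)
    {W : Submodule K V} (hW : ∀ u ∈ W, ∀ v ∈ W, B u v = 0) (hdim : finrank K V ≤ 2 * finrank K W) :
    B.orthogonal W = W := by
  have hle : W ≤ B.orthogonal W := fun v hv u hu => hW u hu v hv
  refine (Submodule.eq_of_le_of_finrank_le hle ?_).symm
  have hfinrank := LinearMap.BilinForm.finrank_orthogonal hB W
  omega

/-- The Poisson bracket `{A, B}` for the standard symplectic form, that is, the derivative of `A`
along the Hamiltonian vector field of `B`. -/
def poissonBracket {n : ℕ} (A B : (Fin (2 * n) → ℝ) → ℝ) (x : Fin (2 * n) → ℝ) : ℝ :=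
  fderiv ℝ A x ((sympDual n).symm (fderiv ℝ B x))

namespace LagrangianGerm

variable {n : ℕ} (L : LagrangianGerm n)

/-- The common zero set of the defining functions; near `0` it is the Lagrangian submanifold. -/
def zeroLocus : Set (Fin (2 * n) → ℝ) := {x | ∀ i, L.H i x = 0}

/-- The common kernel of the differentials of the defining functions; at the points of the zero
locus near `0` it is the tangent space of the Lagrangian submanifold. -/
def tangentSpace (x : Fin (2 * n) → ℝ) : Submodule ℝ (Fin (2 * n) → ℝ) :=
  ⨅ i, (fderiv ℝ (L.H i) x).ker

/-- The combination `∑ aᵢHᵢ` of the defining functions. -/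
def combination (a : Fin n → ℝ) (x : Fin (2 * n) → ℝ) : ℝ := ∑ i, a i * L.H i x

variable {L}

theorem mem_tangentSpace {x v : Fin (2 * n) → ℝ} :
    v ∈ L.tangentSpace x ↔ ∀ i, fderiv ℝ (L.H i) x v = 0 := by
  simp [tangentSpace]

variable (L) in
theorem le_finrank_tangentSpace (x : Fin (2 * n) → ℝ) : n ≤ finrank ℝ (L.tangentSpace x) := by
  have hker : L.tangentSpace x = (ContinuousLinearMap.pi fun i => fderiv ℝ (L.H i) x).ker := by
    ext v; simp [mem_tangentSpace, funext_iff]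
  have hrank := LinearMap.finrank_range_add_finrank_ker
    (ContinuousLinearMap.pi fun i => fderiv ℝ (L.H i) x).toLinearMap
  have hrange := Submodule.finrank_le
    (LinearMap.range (ContinuousLinearMap.pi fun i => fderiv ℝ (L.H i) x).toLinearMap)
  rw [finrank_fin_fun] at hrank hrange
  rw [hker]
  omega

theorem zero_mem_zeroLocus : 0 ∈ L.zeroLocus := L.zero_at_zero

variable (L) in
theorem eventually_linearIndependent_fderiv :
    ∀ᶠ x in 𝓝[L.zeroLocus] 0, LinearIndependent ℝ fun i => fderiv ℝ (L.H i) x := by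
  obtain ⟨U, hU, h0, hlagr⟩ := L.lagrangian
  filter_upwards [mem_nhdsWithin_of_mem_nhds (hU.mem_nhds h0), self_mem_nhdsWithin] with x hxU hxL
  exact (hlagr x hxU hxL).1

variable (L) in
theorem eventually_orthogonal_tangentSpace :
    ∀ᶠ x in 𝓝[L.zeroLocus] 0,
      (sympForm n).orthogonal (L.tangentSpace x) = L.tangentSpace x := by
  obtain ⟨U, hU, h0, hlagr⟩ := L.lagrangian
  filter_upwards [mem_nhdsWithin_of_mem_nhds (hU.mem_nhds h0), self_mem_nhdsWithin] with x hxU hxL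
  refine orthogonal_eq_self_of_isotropic sympForm_nondegenerate (fun u hu v hv => ?_) ?_
  · exact (hlagr x hxU hxL).2 u v (mem_tangentSpace.1 hu) (mem_tangentSpace.1 hv)
  · rw [finrank_fin_fun]
    exact Nat.mul_le_mul_left 2 (L.le_finrank_tangentSpace x)

theorem fderiv_apply_eq_zero {A : (Fin (2 * n) → ℝ) → ℝ} {x v : Fin (2 * n) → ℝ}
    (hx : x ∈ L.zeroLocus) (hli : LinearIndependent ℝ fun i => fderiv ℝ (L.H i) x)
    (hA : ContDiffAt ℝ 1 A x) (hvan : ∀ᶠ y in 𝓝[L.zeroLocus] x, A y = 0)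
    (hv : v ∈ L.tangentSpace x) : fderiv ℝ A x v = 0 := by
  have hlevel : L.zeroLocus = {y | ∀ i, L.H i y = L.H i x} := by
    ext y; simp only [zeroLocus, Set.mem_ofPred_eq, hx _]
  refine fderiv_apply_eq_zero_of_eventuallyEq_on_level
    (fun i => (L.smooth i).contDiffAt.hasStrictFDerivAt (by simp))
    (hA.hasStrictFDerivAt one_ne_zero) hli ?_ (mem_tangentSpace.1 hv)
  rw [← hlevel, hvan.self_of_nhdsWithin hx]
  exact hvan

theorem poissonBracket_eventually_eq_zero {A B : (Fin (2 * n) → ℝ) → ℝ}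
    (hA : ContDiff ℝ 1 A) (hB : ContDiff ℝ 1 B) (hA0 : ∀ᶠ x in 𝓝[L.zeroLocus] 0, A x = 0)
    (hB0 : ∀ᶠ x in 𝓝[L.zeroLocus] 0, B x = 0) :
    ∀ᶠ x in 𝓝[L.zeroLocus] 0, poissonBracket A B x = 0 := by
  filter_upwards [self_mem_nhdsWithin, eventually_eventually_nhdsWithin.2 hA0,
    eventually_eventually_nhdsWithin.2 hB0, L.eventually_linearIndependent_fderiv,
    L.eventually_orthogonal_tangentSpace] with x hx hA0 hB0 hli hperp
  refine fderiv_apply_eq_zero hx hli hA.contDiffAt hA0 ?_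
  rw [← hperp]
  intro v hv
  rw [sympForm_apply, stdSymp_swap, stdSymp_sympDual_symm,
    fderiv_apply_eq_zero hx hli hB.contDiffAt hB0 hv, neg_zero]

theorem fderiv_fderiv_apply_comm {A B : (Fin (2 * n) → ℝ) → ℝ} {X Y Z : Fin (2 * n) → ℝ}
    (hA : ContDiff ℝ 2 A) (hB : ContDiff ℝ 2 B) (hA0 : ∀ᶠ x in 𝓝[L.zeroLocus] 0, A x = 0)
    (hB0 : ∀ᶠ x in 𝓝[L.zeroLocus] 0, B x = 0) (hX : fderiv ℝ A 0 = sympDual n X)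
    (hY : fderiv ℝ B 0 = sympDual n Y) (hZ : Z ∈ L.tangentSpace 0) :
    fderiv ℝ (fderiv ℝ A) 0 Z Y = fderiv ℝ (fderiv ℝ B) 0 Z X := by
  have hA' : ContDiff ℝ 1 (fderiv ℝ A) := hA.fderiv_right (by norm_num)
  have hB' : ContDiff ℝ 1 (fderiv ℝ B) := hB.fderiv_right (by norm_num)
  have hvan := poissonBracket_eventually_eq_zero (hA.of_le (by norm_num)) (hB.of_le (by norm_num))
    hA0 hB0
  have hzero : fderiv ℝ (poissonBracket A B) 0 Z = 0 :=
    fderiv_apply_eq_zero zero_mem_zeroLocus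
      (L.eventually_linearIndependent_fderiv.self_of_nhdsWithin zero_mem_zeroLocus)
      (hA'.clm_apply ((sympDual n).symm.contDiff.comp hB')).contDiffAt hvan hZ
  have hderiv : fderiv ℝ (poissonBracket A B) 0 Z = fderiv ℝ (fderiv ℝ A) 0 Z Y
      + sympDual n X ((sympDual n).symm (fderiv ℝ (fderiv ℝ B) 0 Z)) := by
    have hprod := (hA'.differentiable one_ne_zero 0).hasFDerivAt.clm_apply
      ((sympDual n).symm.hasFDerivAt.comp 0 (hB'.differentiable one_ne_zero 0).hasFDerivAt)
    rw [HasFDerivAt.fderiv (f := poissonBracket A B) hprod, ← hX,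
      ← (sympDual n).symm_apply_apply Y, ← hY]
    exact add_comm _ _
  rw [hderiv, sympDual_apply, stdSymp_swap, stdSymp_sympDual_symm] at hzero
  exact eq_of_sub_eq_zero hzero

theorem contDiff_combination (a : Fin n → ℝ) (k : ℕ) : ContDiff ℝ k (L.combination a) :=
  ContDiff.sum fun i _ => contDiff_const.mul (contDiff_infty.1 (L.smooth i) k)

theorem combination_eq_zero {x : Fin (2 * n) → ℝ} (a : Fin n → ℝ) (hx : x ∈ L.zeroLocus) :
    L.combination a x = 0 :=
  Finset.sum_eq_zero fun i _ => by rw [hx i, mul_zero]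

theorem exists_fderiv_combination_eq_sympDual {w : Fin (2 * n) → ℝ} (hw : w ∈ L.tangentSpace 0) :
    ∃ a, fderiv ℝ (L.combination a) 0 = sympDual n w := by
  have hperp := L.eventually_orthogonal_tangentSpace.self_of_nhdsWithin zero_mem_zeroLocus
  have hspan : (sympDual n w).toLinearMap ∈
      Submodule.span ℝ (Set.range fun i => (fderiv ℝ (L.H i) 0).toLinearMap) :=
    mem_span_of_iInf_ker_le_ker fun v hv => hperp.ge hv w hw
  obtain ⟨a, ha⟩ := (Submodule.mem_span_range_iff_exists_fun ℝ).1 hspan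
  refine ⟨a, ?_⟩
  have hderiv : HasFDerivAt (L.combination a) (∑ i, a i • fderiv ℝ (L.H i) 0) 0 :=
    HasFDerivAt.fun_sum fun i _ =>
      (((L.smooth i).differentiable (by simp)) 0).hasFDerivAt.const_mul (a i)
  rw [hderiv.fderiv]
  ext v
  simpa using LinearMap.congr_fun ha v

theorem H_comp_isLittleO {f : ℝ → Fin (2 * n) → ℝ} {N : ℕ} (hf : ContDiff ℝ N f) (hf0 : f 0 = 0)
    (h : N < tOrd f L) (i : Fin n) : (fun t => L.H i (f t)) =o[𝓝 0] fun t => t ^ N :=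
  isLittleO_pow_of_lt_vanishOrder ((contDiff_infty.1 (L.smooth i) N).comp hf)
    (by rw [hf0, L.zero_at_zero]) (h.trans_le (iInf_le _ i))

theorem stdSymp_eq_of_five_lt_tOrd {X₂ X₃ X₄ X₅ : Fin (2 * n) → ℝ}
    (h : 5 < tOrd (cuspidalCurve X₂ X₃ X₄ X₅) L) : stdSymp n X₂ X₅ = 2 * stdSymp n X₃ X₄ := by
  have hH (i : Fin n) := H_comp_isLittleO (N := 5) (contDiff_cuspidalCurve X₂ X₃ X₄ X₅)
    (cuspidalCurve_zero X₂ X₃ X₄ X₅) h i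
  have hjet (i : Fin n) := jet_relations_of_comp_cuspidalCurve_isLittleO
    (contDiff_infty.1 (L.smooth i) 3) (L.zero_at_zero i) (hH i)
  have hX₂ : X₂ ∈ L.tangentSpace 0 := mem_tangentSpace.2 fun i => (hjet i).1
  have hX₃ : X₃ ∈ L.tangentSpace 0 := mem_tangentSpace.2 fun i => (hjet i).2.1
  obtain ⟨a, ha⟩ := exists_fderiv_combination_eq_sympDual hX₂
  obtain ⟨b, hb⟩ := exists_fderiv_combination_eq_sympDual hX₃
  have hvan (a : Fin n → ℝ) : ∀ᶠ x in 𝓝[L.zeroLocus] 0, L.combination a x = 0 :=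
    eventually_mem_nhdsWithin.mono fun x hx => combination_eq_zero a hx
  have hjet_combination (a : Fin n → ℝ) := jet_relations_of_comp_cuspidalCurve_isLittleO
    (contDiff_combination a 3) (combination_eq_zero a zero_mem_zeroLocus)
    (IsLittleO.fun_sum fun i _ => (hH i).const_mul_left (a i))
  have hX₅ := (hjet_combination a).2.2.2
  have hX₄ := (hjet_combination b).2.2.1
  have hcomm := fderiv_fderiv_apply_comm (contDiff_combination a 2) (contDiff_combination b 2)
    (hvan a) (hvan b) ha hb hX₂
  rw [ha, sympDual_apply] at hX₅
  rw [hb, sympDual_apply] at hX₄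
  linarith

end LagrangianGerm

theorem Lt1_cuspidalCurve_le_five {n : ℕ} {X₂ X₃ X₄ X₅ : Fin (2 * n) → ℝ}
    (h : stdSymp n X₂ X₅ ≠ 2 * stdSymp n X₃ X₄) : Lt1 (cuspidalCurve X₂ X₃ X₄ X₅) ≤ 5 :=
  iSup_le fun _ => not_lt.1 fun hlt => h (LagrangianGerm.stdSymp_eq_of_five_lt_tOrd hlt)

section GeneratingFunction

variable {n : ℕ}

/-- The momentum projection `(p, q) ↦ p`. -/
def momenta (n : ℕ) : (Fin (2 * n) → ℝ) →L[ℝ] Fin n → ℝ :=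
  ContinuousLinearMap.pi fun i => ContinuousLinearMap.proj (pIndex i)

theorem momenta_apply (x : Fin (2 * n) → ℝ) (i : Fin n) : momenta n x i = x (pIndex i) := rfl

/-- The function `qᵢ - ∂S/∂pᵢ`; these functions cut out the graph of `dS`. -/
def graphEquation (S : (Fin n → ℝ) → ℝ) (i : Fin n) (x : Fin (2 * n) → ℝ) : ℝ :=
  x (qIndex i) - fderiv ℝ S (momenta n x) (Pi.single i 1)

variable {S : (Fin n → ℝ) → ℝ}

theorem contDiff_graphEquation (hS : ContDiff ℝ ∞ S) (i : Fin n) :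
    ContDiff ℝ ∞ (graphEquation S i) :=
  (contDiff_apply ℝ ℝ (qIndex i)).sub
    ((hS.fderiv_right le_rfl |>.comp (momenta n).contDiff).clm_apply contDiff_const)

theorem fderiv_graphEquation_apply (hS : ContDiff ℝ 2 S) (i : Fin n) (x u : Fin (2 * n) → ℝ) :
    fderiv ℝ (graphEquation S i) x u =
      u (qIndex i) - fderiv ℝ (fderiv ℝ S) (momenta n x) (momenta n u) (Pi.single i 1) := by
  have hS' : DifferentiableAt ℝ (fderiv ℝ S) (momenta n x) :=
    (hS.fderiv_right (m := 1) (by norm_num)).differentiable one_ne_zero _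
  have hderiv := (ContinuousLinearMap.proj (R := ℝ) (φ := fun _ => ℝ) (qIndex i)).hasFDerivAt.sub
    ((hS'.hasFDerivAt.comp x (momenta n).hasFDerivAt).clm_apply
      (hasFDerivAt_const (Pi.single i 1) x))
  rw [HasFDerivAt.fderiv (f := graphEquation S i) hderiv]
  simp

theorem linearIndependent_fderiv_graphEquation (hS : ContDiff ℝ 2 S) (x : Fin (2 * n) → ℝ) :
    LinearIndependent ℝ fun i => fderiv ℝ (graphEquation S i) x := by
  refine Fintype.linearIndependent_iff.2 fun a ha j => ?_
  have hmomenta : momenta n (Pi.single (qIndex j) 1) = 0 := by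
    ext i; simp [momenta_apply]
  simpa [fderiv_graphEquation_apply hS, hmomenta, Pi.single_apply] using
    congrArg (fun α : (Fin (2 * n) → ℝ) →L[ℝ] ℝ => α (Pi.single (qIndex j) 1)) ha

theorem stdSymp_eq_zero_of_fderiv_graphEquation_eq_zero (hS : ContDiff ℝ 2 S)
    {x u v : Fin (2 * n) → ℝ} (hu : ∀ i, fderiv ℝ (graphEquation S i) x u = 0)
    (hv : ∀ i, fderiv ℝ (graphEquation S i) x v = 0) : stdSymp n u v = 0 := by
  have hsymm : IsSymmSndFDerivAt ℝ S (momenta n x) := hS.contDiffAt.isSymmSndFDerivAt (by simp)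
  set D := fderiv ℝ (fderiv ℝ S) (momenta n x)
  have hq {w : Fin (2 * n) → ℝ} (hw : ∀ i, fderiv ℝ (graphEquation S i) x w = 0) (i : Fin n) :
      w (qIndex i) = D (momenta n w) (Pi.single i 1) :=
    sub_eq_zero.1 ((fderiv_graphEquation_apply hS i x w).symm.trans (hw i))
  have hexpand (w w' : Fin (2 * n) → ℝ) :
      ∑ i, w' (pIndex i) * D (momenta n w) (Pi.single i 1) = D (momenta n w) (momenta n w') := by
    conv_rhs => rw [pi_eq_sum_univ' (momenta n w')]
    simp [momenta_apply]
  calc stdSymp n u v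
      = ∑ i, u (pIndex i) * D (momenta n v) (Pi.single i 1)
          - ∑ i, v (pIndex i) * D (momenta n u) (Pi.single i 1) := by
        rw [stdSymp_eq_sum, ← Finset.sum_sub_distrib]
        exact Finset.sum_congr rfl fun i _ => by rw [hq hu, hq hv]; ring
    _ = 0 := by rw [hexpand, hexpand, hsymm.eq, sub_self]

/-- The Lagrangian germ `q = dS(p)` with generating function `S`. -/
def LagrangianGerm.ofGeneratingFunction (S : (Fin n → ℝ) → ℝ) (hS : ContDiff ℝ ∞ S)
    (hS0 : fderiv ℝ S 0 = 0) : LagrangianGerm n where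
  H := graphEquation S
  smooth := contDiff_graphEquation hS
  zero_at_zero i := by simp [graphEquation, hS0]
  lagrangian := ⟨Set.univ, isOpen_univ, Set.mem_univ 0, fun x _ _ =>
    ⟨linearIndependent_fderiv_graphEquation (contDiff_infty.1 hS 2) x, fun _ _ =>
      stdSymp_eq_zero_of_fderiv_graphEquation_eq_zero (contDiff_infty.1 hS 2)⟩⟩

end GeneratingFunction

section Branches

variable {n : ℕ} {i j k : Fin n}

/-- The branch `pᵢ = t³`, `qᵢ = (a/2)t⁴`, `qⱼ = bt⁵`, `pₖ = -t²`. The two curves of the class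
`(T₇)³` arise from each other by exchanging `j` and `k` and changing the coefficients. -/
def t7Branch (i j k : Fin n) (a b : ℝ) : ℝ → Fin (2 * n) → ℝ :=
  cuspidalCurve (Pi.single (pIndex k) (-1)) (Pi.single (pIndex i) 1)
    (Pi.single (qIndex i) (a / 2)) (Pi.single (qIndex j) b)

theorem t7Branch_pIndex (i j k : Fin n) (a b t : ℝ) (m : Fin n) :
    t7Branch i j k a b t (pIndex m) =
      (if m = i then t ^ 3 else 0) + if m = k then -t ^ 2 else 0 := by
  simp [t7Branch, cuspidalCurve, Pi.single_apply, add_comm]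

theorem t7Branch_qIndex (i j k : Fin n) (a b t : ℝ) (m : Fin n) :
    t7Branch i j k a b t (qIndex m) =
      (if m = i then a / 2 * t ^ 4 else 0) + if m = j then b * t ^ 5 else 0 := by
  simp [t7Branch, cuspidalCurve, Pi.single_apply, mul_comm]

/-- The cubic generating function `½ pᵢ(α pⱼ² + β pₖ²)`: its derivative `½(α pⱼ² + β pₖ²)` in the
direction `pᵢ` reproduces the coordinate `qᵢ` along both branches. -/
def cubicPotential (i j k : Fin n) (α β : ℝ) (p : Fin n → ℝ) : ℝ :=
  1 / 2 * (p i * (α * p j ^ 2 + β * p k ^ 2))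

theorem cubicPotential_swap (i j k : Fin n) (α β : ℝ) :
    cubicPotential i k j β α = cubicPotential i j k α β := by
  ext p; simp only [cubicPotential, add_comm]

theorem contDiff_cubicPotential (i j k : Fin n) (α β : ℝ) :
    ContDiff ℝ ∞ (cubicPotential i j k α β) := by
  unfold cubicPotential; fun_prop

theorem fderiv_cubicPotential_apply (i j k : Fin n) (α β : ℝ) (p v : Fin n → ℝ) :
    fderiv ℝ (cubicPotential i j k α β) p v =
      1 / 2 * v i * (α * p j ^ 2 + β * p k ^ 2) + p i * (α * p j * v j + β * p k * v k) := by
  have hcoord (m : Fin n) : HasFDerivAt (fun p : Fin n → ℝ => p m)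
      (ContinuousLinearMap.proj (R := ℝ) (φ := fun _ => ℝ) m) p := hasFDerivAt_apply m p
  have hderiv := ((hcoord i).mul ((((hcoord j).pow 2).const_mul α).add
    (((hcoord k).pow 2).const_mul β))).const_mul (1 / 2)
  rw [HasFDerivAt.fderiv (f := cubicPotential i j k α β) hderiv]
  simp only [Nat.add_one_sub_one, pow_one, nsmul_eq_mul, Nat.cast_ofNat, smul_add, Pi.add_apply,
    add_apply, smul_apply, ContinuousLinearMap.proj_apply, smul_eq_mul]
  ring

theorem fderiv_cubicPotential_zero (i j k : Fin n) (α β : ℝ) :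
    fderiv ℝ (cubicPotential i j k α β) 0 = 0 := by
  ext v; simp [fderiv_cubicPotential_apply]

theorem graphEquation_cubicPotential_t7Branch (hij : i ≠ j) (hik : i ≠ k) (hjk : j ≠ k)
    (α β b : ℝ) (m : Fin n) (t : ℝ) :
    graphEquation (cubicPotential i j k α β) m (t7Branch i j k β b t) =
      ((if m = j then b else 0) + if m = k then β else 0) * t ^ 5 := by
  rw [graphEquation, fderiv_cubicPotential_apply]
  simp only [momenta_apply, t7Branch_pIndex, t7Branch_qIndex, Pi.single_apply, hik, hij.symm, hjk,
    hik.symm, if_true, if_false]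
  grind

/-- The Lagrangian germ generated by `½ pᵢ(α pⱼ² + β pₖ²)`. -/
def cubicGerm (i j k : Fin n) (α β : ℝ) : LagrangianGerm n :=
  .ofGeneratingFunction (cubicPotential i j k α β) (contDiff_cubicPotential i j k α β)
    (fderiv_cubicPotential_zero i j k α β)

theorem cubicGerm_swap (i j k : Fin n) (α β : ℝ) : cubicGerm i k j β α = cubicGerm i j k α β := by
  simp only [cubicGerm, cubicPotential_swap i j k α β]

theorem five_le_tOrd_cubicGerm (hij : i ≠ j) (hik : i ≠ k) (hjk : j ≠ k) (α β b : ℝ) :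
    5 ≤ tOrd (t7Branch i j k β b) (cubicGerm i j k α β) := by
  refine le_iInf fun m => ?_
  change 5 ≤ vanishOrder fun t => graphEquation _ m _
  simp only [graphEquation_cubicPotential_t7Branch hij hik hjk]
  exact coe_le_vanishOrder_const_mul_pow _ 5

theorem tOrd_cubicGerm_eq_top (hij : i ≠ j) (hik : i ≠ k) (hjk : j ≠ k) (α : ℝ) :
    tOrd (t7Branch i j k 0 0) (cubicGerm i j k α 0) = ⊤ := by
  refine iInf_eq_top.2 fun m => ?_
  change vanishOrder (fun t => graphEquation _ m _) = ⊤
  simpa [graphEquation_cubicPotential_t7Branch hij hik hjk] using vanishOrder_zero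

theorem Lt1_t7Branch_le_five (hjk : j ≠ k) {a : ℝ} (ha : a ≠ 0) (b : ℝ) :
    Lt1 (t7Branch i j k a b) ≤ 5 :=
  Lt1_cuspidalCurve_le_five (by simp [stdSymp_single_qIndex, hjk, ha])

theorem Lt1_t7Branch_eq_five (hij : i ≠ j) (hik : i ≠ k) (hjk : j ≠ k) {a : ℝ} (ha : a ≠ 0)
    (b : ℝ) : Lt1 (t7Branch i j k a b) = 5 :=
  (Lt1_t7Branch_le_five hjk ha b).antisymm
    ((five_le_tOrd_cubicGerm hij hik hjk 0 a b).trans (le_iSup (tOrd _) _))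

theorem Lt1_t7Branch_eq_top (hij : i ≠ j) (hik : i ≠ k) (hjk : j ≠ k) :
    Lt1 (t7Branch i j k 0 0) = ⊤ :=
  top_le_iff.1 ((tOrd_cubicGerm_eq_top hij hik hjk 0).ge.trans (le_iSup (tOrd _) _))

theorem Lt2_le_Lt1_left (f g : ℝ → Fin (2 * n) → ℝ) : Lt2 f g ≤ Lt1 f :=
  iSup_mono fun _ => min_le_left _ _

theorem Lt2_t7Branch_eq_five (hij : i ≠ j) (hik : i ≠ k) (hjk : j ≠ k) {a : ℝ} (ha : a ≠ 0)
    (b a' b' : ℝ) : Lt2 (t7Branch i j k a b) (t7Branch i k j a' b') = 5 := by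
  refine ((Lt2_le_Lt1_left _ _).trans (Lt1_t7Branch_le_five hjk ha b)).antisymm ?_
  have hfst := five_le_tOrd_cubicGerm hij hik hjk a' a b
  have hsnd := five_le_tOrd_cubicGerm hik hij hjk.symm a a' b'
  rw [cubicGerm_swap] at hsnd
  exact (le_min hfst hsnd).trans (le_iSup (fun L => min (tOrd _ L) (tOrd _ L)) _)

end Branches

/-- Lagrangian tangency orders for the class `(T₇)³`. -/
theorem T7_3_lagrangian_tangency_orders
    (n : ℕ) (hn : 3 ≤ n) (c₁ c₂ : ℝ)
    (B₁ B₂ : ℝ → Fin (2 * n) → ℝ)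
    (hB₁ : B₁ = fun (t : ℝ) (j : Fin (2 * n)) => if (j : ℕ) = 0 then t ^ 3 else if (j : ℕ) = 1 then (1 / 2) * t ^ 4 else if (j : ℕ) = 3 then c₂ * t ^ 5 else if (j : ℕ) = 4 then -t ^ 2 else (0 : ℝ))
    (hB₂ : B₂ = fun (t : ℝ) (j : Fin (2 * n)) => if (j : ℕ) = 0 then t ^ 3 else if (j : ℕ) = 1 then (c₁ / 2) * t ^ 4 else if (j : ℕ) = 2 then -t ^ 2 else (0 : ℝ)) :
    Lt2 B₁ B₂ = 5 ∧ Lt1 B₁ = 5 ∧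
    (c₁ ≠ 0 → Lt1 B₂ = 5) ∧ (c₁ = 0 → Lt1 B₂ = ⊤) := by
  obtain ⟨i, hi⟩ : ∃ i : Fin n, (i : ℕ) = 0 := ⟨⟨0, by omega⟩, rfl⟩
  obtain ⟨j, hj⟩ : ∃ j : Fin n, (j : ℕ) = 1 := ⟨⟨1, by omega⟩, rfl⟩
  obtain ⟨k, hk⟩ : ∃ k : Fin n, (k : ℕ) = 2 := ⟨⟨2, by omega⟩, rfl⟩
  have hij : i ≠ j := by omega
  have hik : i ≠ k := by omega
  have hjk : j ≠ k := by omega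
  have hbranch₁ : B₁ = t7Branch i j k 1 c₂ := funext fun t => ext_pIndex_qIndex
    (fun m => by rw [hB₁, t7Branch_pIndex]; grind [pIndex])
    (fun m => by rw [hB₁, t7Branch_qIndex]; grind [qIndex])
  have hbranch₂ : B₂ = t7Branch i k j c₁ 0 := funext fun t => ext_pIndex_qIndex
    (fun m => by rw [hB₂, t7Branch_pIndex]; grind [pIndex])
    (fun m => by rw [hB₂, t7Branch_qIndex]; grind [qIndex])
  subst hbranch₁ hbranch₂
  refine ⟨Lt2_t7Branch_eq_five hij hik hjk one_ne_zero c₂ c₁ 0,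
    Lt1_t7Branch_eq_five hij hik hjk one_ne_zero c₂,
    fun hc₁ => Lt1_t7Branch_eq_five hik hij hjk.symm hc₁ 0, ?_⟩
  rintro rfl
  exact Lt1_t7Branch_eq_top hik hij hjk.symm

end
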